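/- Let U/K be a finite Galois extension of subfields of ℂ of degree m, with Gal(U/K) = {σ₁,…,σₘ} and K-basis e₁,…,eₘ of U. Let Y ⊆ ℂⁿ be the common zero set of polynomials P₁,…,P_s ∈ U[x₁,…,xₙ]. Suppose that for every field automorphism η of ℂ fixing K pointwise, the coordinatewise image η̂(Y) equals Y. Then Y is also the common zero set of the polynomials Tr(eᵢPⱼ) = Σₖ₌₁ᵐ (eᵢPⱼ)^{σₖ}, for 1 ≤ i ≤ m and 1 ≤ j ≤ s, and all of these polynomials have coefficients in K; in particular Y is defined over K. -/

import Mathlib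

set_option synthInstance.maxHeartbeats 1000000
set_option maxHeartbeats 1000000

/-!
For a fixed point `y`, the sum `Σ_τ P^τ(y) τ(a) = Tr(aP)(y)` is `K`-linear in `a`. If it vanishes
at every `eᵢ`, then it vanishes identically, and by linear independence of characters `P^τ(y) = 0`
for every `τ`; the identity of `Gal(U/K)` gives back `P(y) = 0`. Conversely, every `τ` extends to
an automorphism `η` of the algebraically closed field, and `P^τ(y) = η(P(η⁻¹ y))` vanishes as soon
as `η⁻¹ y` is a zero of `P`.
-/

open MvPolynomial

section AutomorphismExtension

theorem exists_ringEquiv_adjoin_apply_algebraMap {R A ι : Type*} [CommRing R] [CommRing A]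
    [Algebra R A] {x : ι → A} (hx : AlgebraicIndependent R x) (τ : R ≃+* R) :
    ∃ E : Algebra.adjoin R (Set.range x) ≃+* Algebra.adjoin R (Set.range x),
      ∀ r, E (algebraMap R _ r) = algebraMap R _ (τ r) := by
  refine ⟨(hx.aevalEquiv.symm.toRingEquiv.trans (mapEquiv ι τ)).trans
    hx.aevalEquiv.toRingEquiv, fun r => ?_⟩
  have h_symm : hx.aevalEquiv.symm (algebraMap R _ r) = C r := hx.aevalEquiv.symm.commutes r
  have h_map : mapEquiv ι τ (C r) = C (τ r) := map_C _ r
  calc hx.aevalEquiv (mapEquiv ι τ (hx.aevalEquiv.symm (algebraMap R _ r)))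
      = hx.aevalEquiv (C (τ r)) := by rw [h_symm, h_map]
    _ = algebraMap R _ (τ r) := hx.aevalEquiv.commutes (τ r)

theorem exists_algEquiv_apply_algebraMap {K R Ω : Type*} [CommSemiring K] [CommRing R] [Field Ω]
    [IsAlgClosed Ω] [Algebra K R] [Algebra K Ω] [Algebra R Ω] [IsScalarTower K R Ω]
    [FaithfulSMul R Ω] (τ : R ≃ₐ[K] R) :
    ∃ η : Ω ≃ₐ[K] Ω, ∀ r, η (algebraMap R Ω r) = algebraMap R Ω (τ r) := by
  obtain ⟨S, hS⟩ := exists_isTranscendenceBasis R Ω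
  have := IsAlgClosed.isAlgClosure_of_transcendence_basis _ hS
  obtain ⟨E, hE⟩ := exists_ringEquiv_adjoin_apply_algebraMap hS.1 τ.toRingEquiv
  let η := IsAlgClosure.equivOfEquiv Ω Ω E
  have hη (r : R) : η (algebraMap R Ω r) = algebraMap R Ω (τ r) := by
    have h := IsAlgClosure.equivOfEquiv_algebraMap Ω Ω E (algebraMap R _ r)
    rwa [hE] at h
  refine ⟨AlgEquiv.ofRingEquiv (f := η) fun k => ?_, hη⟩
  rw [IsScalarTower.algebraMap_apply K R Ω, hη, τ.commutes]

end AutomorphismExtension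

theorem eq_zero_of_forall_sum_mul_apply_eq_zero {R A B κ ι : Type*} [CommSemiring R] [Semiring A]
    [CommRing B] [IsDomain B] [Algebra R A] [Algebra R B] [Fintype κ] {φ : κ → A →ₐ[R] B}
    (hφ : Function.Injective φ) {e : ι → A} (he : Submodule.span R (Set.range e) = ⊤) {c : κ → B}
    (h : ∀ i, ∑ k, c k * φ k (e i) = 0) (k : κ) : c k = 0 := by
  have h_comb : ∑ k, c k • (φ k).toLinearMap = 0 :=
    LinearMap.ext_on_range he fun i => by simpa using h i
  exact Fintype.linearIndependent_iff.1 ((linearIndependent_toLinearMap R A B).comp φ hφ) c h_comb k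

section PolynomialTrace

variable {K U Ω ι : Type*}

/-- The trace `Tr(f) = Σ_τ f^τ` of a polynomial, where `τ` runs over the `K`-automorphisms of `U`
acting on coefficients. It is kept as a polynomial over `U`; for `U/K` Galois its coefficients
come from `K`. -/
noncomputable def polynomialTrace (K : Type*) [CommSemiring K] [CommSemiring U] [Algebra K U]
    [Fintype (U ≃ₐ[K] U)] (f : MvPolynomial ι U) : MvPolynomial ι U :=
  ∑ τ : U ≃ₐ[K] U, map (τ : U →+* U) f

theorem sum_map_eq_polynomialTrace [CommSemiring K] [CommSemiring U] [Algebra K U]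
    [Fintype (U ≃ₐ[K] U)] {κ : Type*} [Fintype κ] {σ : κ → U ≃ₐ[K] U}
    (hσ : Function.Bijective σ) (f : MvPolynomial ι U) :
    ∑ k, map (σ k).toAlgHom.toRingHom f = polynomialTrace K f :=
  hσ.sum_comp fun τ : U ≃ₐ[K] U => map (τ : U →+* U) f

theorem coeff_polynomialTrace [Field K] [Field U] [Algebra K U] [FiniteDimensional K U]
    [IsGalois K U] (f : MvPolynomial ι U) (d : ι →₀ ℕ) :
    (polynomialTrace K f).coeff d = algebraMap K U (Algebra.trace K U (f.coeff d)) := by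
  simp [polynomialTrace, coeff_sum, coeff_map, trace_eq_sum_automorphisms]

theorem aeval_polynomialTrace_C_mul [CommSemiring K] [CommSemiring U] [CommSemiring Ω]
    [Algebra K U] [Algebra U Ω] [Fintype (U ≃ₐ[K] U)] (y : ι → Ω) (a : U) (f : MvPolynomial ι U) :
    aeval y (polynomialTrace K (C a * f)) =
      ∑ τ : U ≃ₐ[K] U, aeval y (map (τ : U →+* U) f) * algebraMap U Ω (τ a) := by
  simp [polynomialTrace, mul_comm]

theorem forall_aeval_polynomialTrace_eq_zero_iff [CommSemiring K] [CommSemiring U] [CommRing Ω]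
    [IsDomain Ω] [Algebra K U] [Algebra K Ω] [Algebra U Ω] [IsScalarTower K U Ω] [FaithfulSMul U Ω]
    [Fintype (U ≃ₐ[K] U)] {κ : Type*} {e : κ → U} (he : Submodule.span K (Set.range e) = ⊤)
    (y : ι → Ω) (f : MvPolynomial ι U) :
    (∀ i, aeval y (polynomialTrace K (C (e i) * f)) = 0) ↔
      ∀ τ : U ≃ₐ[K] U, aeval y (map (τ : U →+* U) f) = 0 := by
  simp only [aeval_polynomialTrace_C_mul]
  refine ⟨fun h => ?_, fun h i => Finset.sum_eq_zero fun τ _ => by rw [h τ, zero_mul]⟩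
  let φ (τ : U ≃ₐ[K] U) : U →ₐ[K] Ω := (IsScalarTower.toAlgHom K U Ω).comp τ
  have hφ : Function.Injective φ := fun τ τ' hττ' =>
    AlgEquiv.ext fun u => FaithfulSMul.algebraMap_injective U Ω (DFunLike.congr_fun hττ' u)
  exact eq_zero_of_forall_sum_mul_apply_eq_zero hφ he h

end PolynomialTrace

theorem aeval_comp_map {U U' Ω Ω' ι : Type*} [CommSemiring U] [CommSemiring U'] [CommSemiring Ω]
    [CommSemiring Ω'] [Algebra U Ω] [Algebra U' Ω'] {τ : U →+* U'} {η : Ω →+* Ω'}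
    (h : ∀ u, η (algebraMap U Ω u) = algebraMap U' Ω' (τ u)) (y : ι → Ω) (f : MvPolynomial ι U) :
    aeval (η ∘ y) (map τ f) = η (aeval y f) := by
  have h_comp : (algebraMap U' Ω').comp τ = η.comp (algebraMap U Ω) :=
    RingHom.ext fun u => (h u).symm
  rw [aeval_def, aeval_def, eval₂_map, h_comp, eval₂_comp_left]

theorem aeval_map_eq_zero_of_forall_algEquiv {K U Ω ι : Type*} [CommSemiring K] [CommRing U]
    [Field Ω] [IsAlgClosed Ω] [Algebra K U] [Algebra K Ω] [Algebra U Ω] [IsScalarTower K U Ω]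
    [FaithfulSMul U Ω] {f : MvPolynomial ι U} {y : ι → Ω}
    (h : ∀ η : Ω ≃ₐ[K] Ω, aeval (η ∘ y) f = 0) (τ : U ≃ₐ[K] U) :
    aeval y (map (τ : U →+* U) f) = 0 := by
  obtain ⟨η, hη⟩ := exists_algEquiv_apply_algebraMap (Ω := Ω) τ
  have h_cancel : η ∘ (η.symm ∘ y) = y := funext fun i => η.apply_symm_apply (y i)
  calc aeval y (map (τ : U →+* U) f)
      = aeval (η ∘ (η.symm ∘ y)) (map (τ : U →+* U) f) := by rw [h_cancel]
    _ = η (aeval (η.symm ∘ y) f) := aeval_comp_map (η := (η : Ω →+* Ω)) hη _ f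
    _ = 0 := by rw [h η.symm, map_zero]

theorem stmt7_general {K U Ω ι κ J : Type*} [Field K] [Field U] [Field Ω] [IsAlgClosed Ω]
    [Algebra K U] [Algebra K Ω] [Algebra U Ω] [IsScalarTower K U Ω] [FiniteDimensional K U]
    [IsGalois K U] {e : κ → U} (he : Submodule.span K (Set.range e) = ⊤)
    (P : J → MvPolynomial ι U) (Y : Set (ι → Ω)) (hY : Y = {y | ∀ j, aeval y (P j) = 0})
    (hinv : ∀ η : Ω ≃ₐ[K] Ω, Set.MapsTo (fun y => η ∘ y) Y Y) :
    Y = {y | ∀ i j, aeval y (polynomialTrace K (C (e i) * P j)) = 0} ∧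
      ∀ i j d, (polynomialTrace K (C (e i) * P j)).coeff d ∈ (algebraMap K U).range := by
  subst hY
  refine ⟨Set.ext fun y => ⟨fun hy i j => ?_, fun hy j => ?_⟩,
    fun i j d => ⟨_, (coeff_polynomialTrace _ d).symm⟩⟩
  · exact (forall_aeval_polynomialTrace_eq_zero_iff he y (P j)).2
      (aeval_map_eq_zero_of_forall_algEquiv fun η => hinv η hy j) i
  · have h_one : aeval y (map (RingHom.id U) (P j)) = 0 :=
      (forall_aeval_polynomialTrace_eq_zero_iff he y (P j)).1 (fun i => hy i j) AlgEquiv.refl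
    rwa [map_id] at h_one

/-- Let `U/K` be a finite Galois extension of subfields of `ℂ` of degree `m`,
with `Gal(U/K) = {σ₁,…,σₘ}` and `K`-basis `e₁,…,eₘ` of `U`.  Let `Y ⊆ ℂⁿ` be the common zero
set of `P₁,…,P_s ∈ U[x₁,…,xₙ]` and suppose `η̂(Y) = Y` for every field automorphism `η` of `ℂ`
fixing `K` pointwise.  Then `Y` is also the common zero set of the polynomials
`Tr(eᵢ Pⱼ) = Σₖ (eᵢ Pⱼ)^{σₖ}`, all of whose coefficients lie in `K`;
in particular `Y` is defined over `K`. -/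
theorem stmt7 (K : Subfield ℂ) (U : IntermediateField K ℂ)
    [FiniteDimensional K U] [IsGalois K U]
    (n s m : ℕ) (hm : m = Module.finrank K U)
    (σ : Fin m → (U ≃ₐ[K] U)) (hσ : Function.Bijective σ)
    (e : Module.Basis (Fin m) K U)
    (P : Fin s → MvPolynomial (Fin n) U)
    (Y : Set (Fin n → ℂ))
    (hY : Y = {y | ∀ j : Fin s, MvPolynomial.eval₂ U.val.toRingHom y (P j) = 0})
    (hinv : ∀ η : ℂ ≃+* ℂ, (∀ k ∈ K, η k = k) →
      (fun y : Fin n → ℂ => fun i => η (y i)) '' Y = Y) :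
    (Y = {y | ∀ (i : Fin m) (j : Fin s),
        MvPolynomial.eval₂ U.val.toRingHom y
          (∑ k : Fin m,
            MvPolynomial.map (σ k).toAlgHom.toRingHom
              (MvPolynomial.C (e i) * P j)) = 0}) ∧
    (∀ (i : Fin m) (j : Fin s) (d : Fin n →₀ ℕ),
      ((((∑ k : Fin m,
            MvPolynomial.map (σ k).toAlgHom.toRingHom
              (MvPolynomial.C (e i) * P j)).coeff d : ↥U) : ℂ)) ∈ K) := by
  simp only [sum_map_eq_polynomialTrace hσ]
  exact (stmt7_general e.span_eq P Y hY fun η => Set.mapsTo_iff_image_subset.2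
    (hinv η.toRingEquiv fun k hk => η.commutes ⟨k, hk⟩).subset).imp_right
    fun h i j d => (h i j d).elim fun k hk => hk ▸ k.2
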